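/- Comparability of intrinsic scaling parameters at intersecting stopping cylinders (Section 6, inequality (6.18)): Let u be a weak solution to the parabolic double-phase system. Let Λ > 0 and, for i ∈ {1,2}, let zᵢ ∈ Ω_T, λᵢ > 0 and ρᵢ > 0 satisfy Λ = λᵢ^p + a(zᵢ)λᵢ^q, Q_{ρᵢ}^{λᵢ}(zᵢ) ⊂ Ω_T, and ⨍⨍_{Q_{ρᵢ}^{λᵢ}(zᵢ)} (|∇u|^p + a(z)|∇u|^q + |F|^p + a(z)|F|^q) dz = λᵢ^p. Assume further that |a(z₂) − a(z₁)| ≤ [a]_α (10ρ₁)^α and that λ₂ ≥ 1. If λ₂ < λ₁, then λ₁ ≤ [2(1 + 10[a]_α M̃₁^{γ/p})]^{1/p} λ₂; in particular λ₁ ≤ (2K)^{1/p} λ₂, and consequently λ₂^{2−p} ≤ 2K λ₁^{2−p} and λ₂^{2−q} ≤ 2K λ₁^{2−q}. -/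

import Mathlib

noncomputable section

open MeasureTheory Set
open scoped ENNReal RealInnerProductSpace Topology

namespace DoublePhase

abbrev Rn (n : ℕ) : Type := EuclideanSpace ℝ (Fin n)
abbrev RN (N : ℕ) : Type := EuclideanSpace ℝ (Fin N)
abbrev RNn (N n : ℕ) : Type := EuclideanSpace ℝ (Fin N × Fin n)

variable {n N : ℕ}

/-- Time derivative of a space-time test function. -/
def timeDeriv (φ : Rn n × ℝ → RN N) (z : Rn n × ℝ) : RN N :=
  (EuclideanSpace.equiv (Fin N) ℝ).symm fun i => deriv (fun s => φ (z.1, s) i) z.2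

/-- Spatial gradient of a space-time test function, as an `ℝ^{Nn}`-valued map. -/
def spaceGrad (φ : Rn n × ℝ → RN N) (z : Rn n × ℝ) : RNn N n :=
  (EuclideanSpace.equiv (Fin N × Fin n) ℝ).symm fun ij =>
    fderiv ℝ (fun x => φ (x, z.2) ij.1) z.1 (EuclideanSpace.single ij.2 1)

/-- The standard parabolic cylinder `Q_r(z₀) = B_r(x₀) × (t₀ - r², t₀ + r²)`. -/
def Qcyl (z₀ : Rn n × ℝ) (r : ℝ) : Set (Rn n × ℝ) :=
  Metric.ball z₀.1 r ×ˢ Ioo (z₀.2 - r ^ 2) (z₀.2 + r ^ 2)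

/-- The cylinder `Q_{R,S}(z₀) = B_R(x₀) × (t₀ - S, t₀ + S)`. -/
def QRS (z₀ : Rn n × ℝ) (R S' : ℝ) : Set (Rn n × ℝ) :=
  Metric.ball z₀.1 R ×ˢ Ioo (z₀.2 - S') (z₀.2 + S')

/-- Weak solution to the parabolic double-phase system
`u_t - div 𝒜(z, ∇u) = - div (|F|^{p-2} F + a(z) |F|^{q-2} F)` in `Ω_T = Ω × (0,T)`.
Here `du` denotes the (weak) spatial gradient `∇u`. -/
structure IsWeakSolution (p q : ℝ) (Ω : Set (Rn n)) (T : ℝ)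
    (a : Rn n × ℝ → ℝ) (A : Rn n × ℝ → RNn N n → RNn N n)
    (u : Rn n × ℝ → RN N) (du F : Rn n × ℝ → RNn N n) : Prop where
  meas_u : Measurable u
  meas_du : Measurable du
  cont_L2 : ∀ t₀ ∈ Ioo (0:ℝ) T, Filter.Tendsto
      (fun t => ∫ x in Ω, ‖u (x, t) - u (x, t₀)‖ ^ 2)
      (nhdsWithin t₀ (Ioo (0:ℝ) T)) (nhds 0)
  mem_L2 : ∀ t ∈ Ioo (0:ℝ) T, IntegrableOn (fun x => ‖u (x, t)‖ ^ 2) Ω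
  mem_LqW1q : IntegrableOn (fun z => ‖u z‖ ^ q + ‖du z‖ ^ q) (Ω ×ˢ Ioo 0 T)
  weak_grad : ∀ ψ : Rn n × ℝ → ℝ, ContDiff ℝ (⊤ : ℕ∞) ψ →
      tsupport ψ ⊆ Ω ×ˢ Ioo 0 T → ∀ i : Fin N, ∀ j : Fin n,
      ∫ z in Ω ×ˢ Ioo 0 T,
        u z i * fderiv ℝ (fun x => ψ (x, z.2)) z.1 (EuclideanSpace.single j 1)
      = - ∫ z in Ω ×ˢ Ioo 0 T, du z (i, j) * ψ z
  weak_form : ∀ φ : Rn n × ℝ → RN N, ContDiff ℝ (⊤ : ℕ∞) φ →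
      tsupport φ ⊆ Ω ×ˢ Ioo 0 T →
      ∫ z in Ω ×ˢ Ioo 0 T,
        (-(⟪u z, timeDeriv φ z⟫) + ⟪A z (du z), spaceGrad φ z⟫)
      = ∫ z in Ω ×ˢ Ioo 0 T,
        ⟪(‖F z‖ ^ (p - 2) + a z * ‖F z‖ ^ (q - 2)) • F z, spaceGrad φ z⟫

/-- The standing assumptions of the paper: structure conditions, Hölder continuity of the
coefficient `a`, the relation between `p`, `q` and `α`, and a weak solution `u`. -/
structure Setting (n N : ℕ) where
  p : ℝ
  q : ℝ
  α : ℝ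
  ν : ℝ
  L : ℝ
  Ca : ℝ
  Ω : Set (Rn n)
  T : ℝ
  a : Rn n × ℝ → ℝ
  A : Rn n × ℝ → RNn N n → RNn N n
  u : Rn n × ℝ → RN N
  du : Rn n × ℝ → RNn N n
  F : Rn n × ℝ → RNn N n
  hn : 2 ≤ n
  hN : 1 ≤ N
  hp : 2 ≤ p
  hpq : p < q
  hΩ : IsOpen Ω
  hΩb : Bornology.IsBounded Ω
  hT : 0 < T
  hα : 0 < α ∧ α ≤ 1
  hq : q ≤ p + 2 * α / (n + 2)
  ha_nonneg : ∀ z, 0 ≤ a z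
  ha_bdd : BddAbove (a '' (Ω ×ˢ Ioo 0 T))
  hCa : 0 ≤ Ca
  ha_x : ∀ x ∈ Ω, ∀ y ∈ Ω, ∀ t ∈ Ioo (0:ℝ) T, |a (x, t) - a (y, t)| ≤ Ca * ‖x - y‖ ^ α
  ha_t : ∀ x ∈ Ω, ∀ t ∈ Ioo (0:ℝ) T, ∀ s ∈ Ioo (0:ℝ) T,
      |a (x, t) - a (x, s)| ≤ Ca * |t - s| ^ (α / 2)
  hν : 0 < ν
  hνL : ν ≤ L
  hA_coer : ∀ᵐ z ∂(volume.restrict (Ω ×ˢ Ioo 0 T)), ∀ ξ : RNn N n,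
      ν * (‖ξ‖ ^ p + a z * ‖ξ‖ ^ q) ≤ ⟪A z ξ, ξ⟫
  hA_bdd : ∀ᵐ z ∂(volume.restrict (Ω ×ˢ Ioo 0 T)), ∀ ξ : RNn N n,
      ‖A z ξ‖ ≤ L * (‖ξ‖ ^ (p - 1) + a z * ‖ξ‖ ^ (q - 1))
  hF : IntegrableOn (fun z => ‖F z‖ ^ p + a z * ‖F z‖ ^ q) (Ω ×ˢ Ioo 0 T)
  hsol : IsWeakSolution p q Ω T a A u du F

namespace Setting

variable {n N : ℕ} (S : Setting n N)

/-- The space-time cylinder `Ω_T = Ω × (0,T)`. -/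
def ΩT : Set (Rn n × ℝ) := S.Ω ×ˢ Ioo 0 S.T

/-- `H(z, |∇u|) = |∇u|^p + a(z) |∇u|^q`. -/
def Hdu (z : Rn n × ℝ) : ℝ := ‖S.du z‖ ^ S.p + S.a z * ‖S.du z‖ ^ S.q

/-- `H(z, |F|) = |F|^p + a(z) |F|^q`. -/
def HF (z : Rn n × ℝ) : ℝ := ‖S.F z‖ ^ S.p + S.a z * ‖S.F z‖ ^ S.q

/-- The `(p,q)`-growth function `g_{z₀}(s) = s^p + a(z₀) s^q`. -/
def g (z₀ : Rn n × ℝ) (s : ℝ) : ℝ := s ^ S.p + S.a z₀ * s ^ S.q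

/-- `M₁ = ∬_{Ω_T} (|∇u|^p + a|∇u|^q + |F|^p + a|F|^q) dz`. -/
def M1 : ℝ := ∫ z in S.ΩT, (S.Hdu z + S.HF z)

/-- `M₂ = sup_{t ∈ (0,T)} ∫_Ω |u(x,t)|² dx`. -/
def M2 : ℝ := ⨆ t ∈ Ioo (0:ℝ) S.T, ∫ x in S.Ω, ‖S.u (x, t)‖ ^ 2

/-- `γ = α p / (n+2)`. -/
def gam : ℝ := S.α * S.p / (n + 2)

/-- `M̃₁ = M₁ / (2 |B₁|)`. -/
def Mt1 : ℝ := S.M1 / (2 * (volume (Metric.ball (0 : Rn n) 1)).toReal)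

/-- `K = 1 + 40 [a]_α M̃₁^{γ/p}`. -/
def Kc : ℝ := 1 + 40 * S.Ca * S.Mt1 ^ (S.gam / S.p)

/-- The covering constant `c_v = 10 K`. -/
def cv : ℝ := 10 * S.Kc

/-- The `p`-intrinsic cylinder `Q_ρ^λ(z₀) = B_ρ(x₀) × (t₀ - λ^{2-p}ρ², t₀ + λ^{2-p}ρ²)`. -/
def Qp (z₀ : Rn n × ℝ) (l ρ : ℝ) : Set (Rn n × ℝ) :=
  Metric.ball z₀.1 ρ ×ˢ Ioo (z₀.2 - l ^ (2 - S.p) * ρ ^ 2) (z₀.2 + l ^ (2 - S.p) * ρ ^ 2)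

/-- The `(p,q)`-intrinsic cylinder
`G_ρ^λ(z₀) = B_ρ(x₀) × (t₀ - λ²ρ²/g_{z₀}(λ), t₀ + λ²ρ²/g_{z₀}(λ))`. -/
def Gpq (z₀ : Rn n × ℝ) (l ρ : ℝ) : Set (Rn n × ℝ) :=
  Metric.ball z₀.1 ρ ×ˢ
    Ioo (z₀.2 - l ^ 2 / S.g z₀ l * ρ ^ 2) (z₀.2 + l ^ 2 / S.g z₀ l * ρ ^ 2)

/-- `inf` of the coefficient `a` over a set. -/
def infa (A : Set (Rn n × ℝ)) : ℝ := sInf (S.a '' A)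

/-- The super-level set `E(Λ)`. -/
def Eset (Λ : ℝ) : Set (Rn n × ℝ) := {z ∈ S.ΩT | Λ < S.Hdu z}

/-- The super-level set `Φ(Λ)`. -/
def Φset (Λ : ℝ) : Set (Rn n × ℝ) := {z ∈ S.ΩT | Λ < S.HF z}

/-- `S(u)_{z₀;ρ}^{λ^p}`. -/
def Sp (z₀ : Rn n × ℝ) (l ρ : ℝ) : ℝ :=
  ⨆ t ∈ Ioo (z₀.2 - l ^ (2 - S.p) * ρ ^ 2) (z₀.2 + l ^ (2 - S.p) * ρ ^ 2),
    ⨍ x in Metric.ball z₀.1 ρ, ‖S.u (x, t) - ⨍ w in S.Qp z₀ l ρ, S.u w‖ ^ 2 / ρ ^ 2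

/-- `S(u)_{z₀;ρ}^{g(λ)}`. -/
def SG (z₀ : Rn n × ℝ) (l ρ : ℝ) : ℝ :=
  ⨆ t ∈ Ioo (z₀.2 - l ^ 2 / S.g z₀ l * ρ ^ 2) (z₀.2 + l ^ 2 / S.g z₀ l * ρ ^ 2),
    ⨍ x in Metric.ball z₀.1 ρ, ‖S.u (x, t) - ⨍ w in S.Gpq z₀ l ρ, S.u w‖ ^ 2 / ρ ^ 2

/-- Condition (4.3): `K λ^p ≥ a(z₀) λ^q` and the `p`-intrinsic average bound on `Q_{4ρ}^λ(z₀)`. -/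
def cond43 (z₀ : Rn n × ℝ) (l ρ : ℝ) : Prop :=
  S.a z₀ * l ^ S.q ≤ S.Kc * l ^ S.p ∧
  (⨍ z in S.Qp z₀ l (4 * ρ), (S.Hdu z + S.HF z)) < l ^ S.p

/-- Condition (4.4): `K λ^p ≤ a(z₀) λ^q`, comparability of `a` on `G_{4ρ}^λ(z₀)` and the
`(p,q)`-intrinsic average bound. -/
def cond44 (z₀ : Rn n × ℝ) (l ρ : ℝ) : Prop :=
  S.Kc * l ^ S.p ≤ S.a z₀ * l ^ S.q ∧
  (∀ z ∈ S.Gpq z₀ l (4 * ρ), S.a z₀ / 2 ≤ S.a z ∧ S.a z ≤ 2 * S.a z₀) ∧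
  (⨍ z in S.Gpq z₀ l (4 * ρ), (S.Hdu z + S.HF z)) < S.g z₀ l

/-- Condition (5.1). -/
def cond51 (z₀ : Rn n × ℝ) (l ρ : ℝ) : Prop :=
  S.a z₀ * l ^ S.q ≤ S.Kc * l ^ S.p ∧
  (∀ s ∈ Ioc ρ (S.cv * (2 * ρ)), (⨍ z in S.Qp z₀ l s, (S.Hdu z + S.HF z)) < l ^ S.p) ∧
  (⨍ z in S.Qp z₀ l ρ, (S.Hdu z + S.HF z)) = l ^ S.p

/-- Condition (5.2). -/
def cond52 (z₀ : Rn n × ℝ) (l ρ : ℝ) : Prop :=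
  S.Kc * l ^ S.p ≤ S.a z₀ * l ^ S.q ∧
  (∀ z ∈ S.Gpq z₀ l (4 * ρ), S.a z₀ / 2 ≤ S.a z ∧ S.a z ≤ 2 * S.a z₀) ∧
  (∀ s ∈ Ioc ρ (S.cv * (2 * ρ)), (⨍ z in S.Gpq z₀ l s, (S.Hdu z + S.HF z)) < S.g z₀ l) ∧
  (⨍ z in S.Gpq z₀ l ρ, (S.Hdu z + S.HF z)) = S.g z₀ l

end Setting

/-! Since `λ₁^p` is the average of the density over the first cylinder, whose volume is
`2 |B₁| λ₁^{2-p} ρ₁^{n+2}`, one gets `λ₁² ρ₁^{n+2} ≤ M̃₁`, hence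
`ρ₁^α λ₁^{2α/(n+2)} ≤ M̃₁^{γ/p}`. As `q - p ≤ 2α/(n+2)`, the oscillation `10 [a]_α ρ₁^α` of `a`
between the two centres is therefore at most `10 [a]_α M̃₁^{γ/p} λ₁^{p-q}`: on passing from
`λ₁` to the smaller `λ₂`, the phase identity
`λ₁^p + a(z₁) λ₁^q = λ₂^p + a(z₂) λ₂^q` can lose only a factor `1 + 10 [a]_α M̃₁^{γ/p}` in the
`p`-phase. -/

section RealInequalities

variable {p q s x y C : ℝ}

lemma mul_rpow_le_mul_rpow_of_exponent_le_one (hx : 1 ≤ x) (hy : 0 ≤ y) (hs : s ≤ 1) :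
    (x * y) ^ s ≤ x * y ^ s := by
  rw [Real.mul_rpow (zero_le_one.trans hx) hy]
  gcongr
  exact Real.rpow_le_self_of_one_le hx hs

lemma le_add_mul_rpow_of_abs_sub_le {a₁ a₂ c : ℝ} (hc : 0 ≤ c) (hx : 1 ≤ x) (hy : 0 ≤ y)
    (hs : s ≤ 1) (h : |a₂ - a₁| ≤ c * (x * y) ^ s) : a₂ ≤ a₁ + x * c * y ^ s := by
  have := mul_le_mul_of_nonneg_left (mul_rpow_le_mul_rpow_of_exponent_le_one hx hy hs) hc
  linarith [le_of_abs_le h]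

lemma rpow_le_of_rpow_le_of_exponent_le (hx : 0 ≤ x) (hC : 1 ≤ C) (hs : 0 ≤ s) (hsp : s ≤ p)
    (h : x ^ p ≤ C) : x ^ s ≤ C := by
  rcases le_total x 1 with hx1 | hx1
  · exact (Real.rpow_le_one hx hx1 hs).trans hC
  · exact (Real.rpow_le_rpow_of_exponent_le hx1 hsp).trans h

lemma le_rpow_one_div_mul (hp : 0 < p) (hx : 0 ≤ x) (hy : 0 ≤ y) (hC : 0 ≤ C)
    (h : x ^ p ≤ C * y ^ p) : x ≤ C ^ (1 / p) * y := by
  rw [← Real.rpow_le_rpow_iff hx (by positivity) hp, Real.mul_rpow (by positivity) hy, one_div,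
    Real.rpow_inv_rpow hC hp.ne']
  exact h

lemma rpow_neg_le_mul_rpow_neg (hx : 0 < x) (hy : 0 < y) (hC : 1 ≤ C) (hs : 0 ≤ s) (hsp : s ≤ p)
    (h : x ^ p ≤ C * y ^ p) : y ^ (-s) ≤ C * x ^ (-s) := by
  have ratio_le : x ^ s / y ^ s ≤ C := by
    rw [← Real.div_rpow hx.le hy.le]
    refine rpow_le_of_rpow_le_of_exponent_le (by positivity) hC hs hsp ?_
    rwa [Real.div_rpow hx.le hy.le, div_le_iff₀ (by positivity)]
  rw [Real.rpow_neg hx.le, Real.rpow_neg hy.le, ← div_eq_mul_inv, le_div_iff₀ (by positivity),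
    ← div_eq_inv_mul]
  exact ratio_le

lemma rpow_mul_rpow_le_of_sq_mul_pow_le {k : ℕ} {M : ℝ} (hk : k ≠ 0) (hs : 0 ≤ s) (hx : 0 ≤ x)
    (hy : 0 ≤ y) (h : x ^ 2 * y ^ k ≤ M) : y ^ s * x ^ (2 * s / k) ≤ M ^ (s / k) := by
  have hk' : (k : ℝ) ≠ 0 := mod_cast hk
  calc y ^ s * x ^ (2 * s / k) = (x ^ 2 * y ^ k) ^ (s / k) := by
        rw [Real.mul_rpow (by positivity) (by positivity), ← Real.rpow_natCast_mul hx,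
          ← Real.rpow_natCast_mul hy, mul_div_cancel₀ _ hk', mul_comm, Nat.cast_two, mul_div_assoc]
    _ ≤ M ^ (s / k) := by gcongr

lemma rpow_le_one_add_mul_rpow_of_phase_le {a₁ a₂ b δ : ℝ} (hp : 0 ≤ p) (hpq : p ≤ q)
    (hx : 0 ≤ x) (hy : 0 < y) (ha₁ : 0 ≤ a₁) (hδ : 0 ≤ δ)
    (hphase : x ^ p + a₁ * x ^ q ≤ y ^ p + a₂ * y ^ q) (ha : a₂ ≤ a₁ + δ)
    (hb : δ * x ^ (q - p) ≤ b) : x ^ p ≤ (1 + b) * y ^ p := by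
  rcases le_total x y with hxy | hyx
  · have hb₀ : 0 ≤ b := le_trans (by positivity) hb
    calc x ^ p ≤ 1 * y ^ p := by rw [one_mul]; gcongr
      _ ≤ (1 + b) * y ^ p := by gcongr; linarith
  · have hq : 0 ≤ q := hp.trans hpq
    have : 0 ≤ q - p := sub_nonneg.2 hpq
    have q_phase_le : a₂ * y ^ q ≤ a₁ * x ^ q + δ * y ^ q := by
      calc a₂ * y ^ q ≤ a₁ * y ^ q + δ * y ^ q := by rw [← add_mul]; gcongr
        _ ≤ a₁ * x ^ q + δ * y ^ q := by gcongr
    calc x ^ p ≤ y ^ p + δ * y ^ q := by linarith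
      _ = (1 + δ * y ^ (q - p)) * y ^ p := by
        rw [add_mul, one_mul, mul_assoc, ← Real.rpow_add hy, sub_add_cancel]
      _ ≤ (1 + δ * x ^ (q - p)) * y ^ p := by gcongr
      _ ≤ (1 + b) * y ^ p := by gcongr

end RealInequalities

lemma continuousOn_prod_of_separately_holder {X Y Z : Type*} [PseudoMetricSpace X]
    [PseudoMetricSpace Y] [PseudoMetricSpace Z] {f : X × Y → Z} {s : Set X} {t : Set Y}
    {C D α β : ℝ} (hα : 0 < α) (hβ : 0 < β)
    (hX : ∀ x ∈ s, ∀ x' ∈ s, ∀ y ∈ t, dist (f (x, y)) (f (x', y)) ≤ C * dist x x' ^ α)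
    (hY : ∀ x ∈ s, ∀ y ∈ t, ∀ y' ∈ t, dist (f (x, y)) (f (x, y')) ≤ D * dist y y' ^ β) :
    ContinuousOn f (s ×ˢ t) := by
  rintro ⟨x₀, y₀⟩ ⟨hx₀, hy₀⟩
  let modulus : X × Y → ℝ := fun z => C * dist z.1 x₀ ^ α + D * dist z.2 y₀ ^ β
  have modulus_continuous : Continuous modulus := by
    fun_prop (disch := positivity)
  have modulus_tendsto : Filter.Tendsto modulus (𝓝[s ×ˢ t] (x₀, y₀)) (𝓝 0) := by
    convert modulus_continuous.continuousWithinAt.tendsto using 2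
    simp only [modulus, dist_self, Real.zero_rpow hα.ne', Real.zero_rpow hβ.ne', mul_zero, add_zero]
  refine tendsto_iff_dist_tendsto_zero.2 (squeeze_zero' (.of_forall fun _ => dist_nonneg) ?_
    modulus_tendsto)
  filter_upwards [self_mem_nhdsWithin] with ⟨x, y⟩ ⟨hx, hy⟩
  exact (dist_triangle _ (f (x₀, y)) _).trans
    (add_le_add (hX x hx x₀ hx₀ y hy) (hY x₀ hx₀ y hy y₀ hy₀))

lemma mul_measureReal_le_setIntegral_of_le_setAverage {X : Type*} [MeasurableSpace X]
    {μ : Measure X} {f : X → ℝ} {s U : Set X} {c : ℝ} (hf : IntegrableOn f U μ)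
    (hf₀ : 0 ≤ᵐ[μ.restrict U] f) (hsU : s ⊆ U) (hc : c ≤ ⨍ z in s, f z ∂μ) :
    c * μ.real s ≤ ∫ z in U, f z ∂μ := by
  rcases eq_or_ne (μ s) ⊤ with hs | hs
  · rw [Measure.real, hs, ENNReal.toReal_top, mul_zero]
    exact integral_nonneg_of_ae hf₀
  · calc c * μ.real s ≤ (⨍ z in s, f z ∂μ) * μ.real s := by gcongr
      _ = ∫ z in s, f z ∂μ := by rw [mul_comm, ← smul_eq_mul, measure_smul_setAverage f hs]
      _ ≤ ∫ z in U, f z ∂μ := setIntegral_mono_set hf hf₀ hsU.eventuallyLE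

section IntrinsicCylinder

open Module (finrank)

variable {E : Type*} [NormedAddCommGroup E]

/-- The `p`-intrinsic cylinder `B_ρ(x₀) × (t₀ - l^{2-p}ρ², t₀ + l^{2-p}ρ²)` over an arbitrary
normed space; `Setting.Qp` is the Euclidean case with the exponent of the setting. -/
def intrinsicCylinder (p : ℝ) (z₀ : E × ℝ) (l ρ : ℝ) : Set (E × ℝ) :=
  Metric.ball z₀.1 ρ ×ˢ Ioo (z₀.2 - l ^ (2 - p) * ρ ^ 2) (z₀.2 + l ^ (2 - p) * ρ ^ 2)

/-- The mass of a density over a space-time set, divided by `2 |B₁|`, the volume of the cylinder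
`B₁ × (-1, 1)`. For the double-phase energy over `Ω_T` this is the constant `M̃₁`. -/
def normalizedMass [MeasurableSpace E] (μ : Measure E) (f : E × ℝ → ℝ) (U : Set (E × ℝ)) : ℝ :=
  (∫ z in U, f z ∂μ.prod volume) / (2 * μ.real (Metric.ball 0 1))

variable [NormedSpace ℝ E] [FiniteDimensional ℝ E] [MeasurableSpace E] [BorelSpace E]
  {μ : Measure E} [μ.IsAddHaarMeasure] {p q α c C a₁ a₂ l l₁ l₂ ρ : ℝ}
  {f : E × ℝ → ℝ} {U : Set (E × ℝ)} {z : E × ℝ}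

lemma measureReal_intrinsicCylinder (hl : 0 < l) (hρ : 0 < ρ) :
    (μ.prod volume).real (intrinsicCylinder p z l ρ) =
      2 * μ.real (Metric.ball 0 1) * (l ^ (2 - p) * ρ ^ (finrank ℝ E + 2)) := by
  have height_nonneg : 0 ≤ l ^ (2 - p) * ρ ^ 2 := by positivity
  rw [intrinsicCylinder, measureReal_prod_prod, Real.volume_real_Ioo_of_le (by linarith),
    Measure.real, Measure.addHaar_ball_of_pos μ _ hρ, ENNReal.toReal_mul,
    ENNReal.toReal_ofReal (by positivity), ← Measure.real]
  ring

lemma sq_mul_pow_le_normalizedMass (hf : IntegrableOn f U (μ.prod volume))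
    (hf₀ : 0 ≤ᵐ[(μ.prod volume).restrict U] f) (hl : 0 < l) (hρ : 0 < ρ)
    (hsub : intrinsicCylinder p z l ρ ⊆ U)
    (havg : l ^ p ≤ ⨍ w in intrinsicCylinder p z l ρ, f w ∂μ.prod volume) :
    l ^ 2 * ρ ^ (finrank ℝ E + 2) ≤ normalizedMass μ f U := by
  have ball_pos : 0 < μ.real (Metric.ball (0 : E) 1) :=
    ENNReal.toReal_pos (Metric.measure_ball_pos μ _ one_pos).ne' measure_ball_lt_top.ne
  have rpow_mul_rpow_two_sub : l ^ p * l ^ (2 - p) = l ^ 2 := by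
    rw [← Real.rpow_add hl, add_sub_cancel, Real.rpow_two]
  rw [normalizedMass, le_div_iff₀ (by positivity)]
  calc l ^ 2 * ρ ^ (finrank ℝ E + 2) * (2 * μ.real (Metric.ball 0 1))
      = l ^ p * (μ.prod volume).real (intrinsicCylinder p z l ρ) := by
        rw [measureReal_intrinsicCylinder hl hρ, ← rpow_mul_rpow_two_sub]
        ring
    _ ≤ ∫ w in U, f w ∂μ.prod volume :=
        mul_measureReal_le_setIntegral_of_le_setAverage hf hf₀ hsub havg

lemma rpow_mul_rpow_le_normalizedMass_rpow (hf : IntegrableOn f U (μ.prod volume))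
    (hf₀ : 0 ≤ᵐ[(μ.prod volume).restrict U] f) (hpq : p ≤ q)
    (hq : q ≤ p + 2 * α / (finrank ℝ E + 2)) (hl : 1 ≤ l) (hρ : 0 < ρ)
    (hsub : intrinsicCylinder p z l ρ ⊆ U)
    (havg : l ^ p ≤ ⨍ w in intrinsicCylinder p z l ρ, f w ∂μ.prod volume) :
    ρ ^ α * l ^ (q - p) ≤ normalizedMass μ f U ^ (α / (finrank ℝ E + 2)) := by
  have hl₀ : 0 < l := one_pos.trans_le hl
  have hα : 0 ≤ α := by
    have : 0 ≤ 2 * α / (finrank ℝ E + 2) := by linarith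
    rw [le_div_iff₀ (by positivity)] at this
    linarith
  have scaled := rpow_mul_rpow_le_of_sq_mul_pow_le (by positivity) hα hl₀.le hρ.le
    (sq_mul_pow_le_normalizedMass hf hf₀ hl₀ hρ hsub havg)
  push_cast at scaled
  calc ρ ^ α * l ^ (q - p) ≤ ρ ^ α * l ^ (2 * α / (finrank ℝ E + 2)) := by gcongr; linarith
    _ ≤ normalizedMass μ f U ^ (α / (finrank ℝ E + 2)) := scaled

theorem lambda_comparable_general (hf : IntegrableOn f U (μ.prod volume))
    (hf₀ : 0 ≤ᵐ[(μ.prod volume).restrict U] f) (hp : 0 < p) (hpq : p ≤ q)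
    (hq : q ≤ p + 2 * α / (finrank ℝ E + 2)) (hc : 0 ≤ c) (ha₁ : 0 ≤ a₁)
    (hl₁ : 1 ≤ l₁) (hl₂ : 0 < l₂) (hρ : 0 < ρ)
    (hphase : l₁ ^ p + a₁ * l₁ ^ q ≤ l₂ ^ p + a₂ * l₂ ^ q)
    (hsub : intrinsicCylinder p z l₁ ρ ⊆ U)
    (havg : l₁ ^ p ≤ ⨍ w in intrinsicCylinder p z l₁ ρ, f w ∂μ.prod volume)
    (ha : a₂ ≤ a₁ + c * ρ ^ α) (hC : 1 + c * normalizedMass μ f U ^ (α / (finrank ℝ E + 2)) ≤ C) :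
    l₁ ≤ C ^ (1 / p) * l₂ ∧ ∀ r ∈ Icc 2 (p + 2), l₂ ^ (2 - r) ≤ C * l₁ ^ (2 - r) := by
  have hl₁₀ : 0 < l₁ := one_pos.trans_le hl₁
  have oscillation_le :
      c * ρ ^ α * l₁ ^ (q - p) ≤ c * normalizedMass μ f U ^ (α / (finrank ℝ E + 2)) := by
    rw [mul_assoc]
    gcongr
    exact rpow_mul_rpow_le_normalizedMass_rpow hf hf₀ hpq hq hl₁ hρ hsub havg
  have one_le_C : 1 ≤ C := by
    have : 0 ≤ c * ρ ^ α * l₁ ^ (q - p) := by positivity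
    linarith
  have p_phase_le : l₁ ^ p ≤ C * l₂ ^ p :=
    (rpow_le_one_add_mul_rpow_of_phase_le hp.le hpq hl₁₀.le hl₂ ha₁ (by positivity) hphase ha
      oscillation_le).trans (by gcongr)
  refine ⟨le_rpow_one_div_mul hp hl₁₀.le hl₂.le (zero_le_one.trans one_le_C) p_phase_le,
    fun r ⟨hr₂, hrp⟩ => ?_⟩
  rw [← neg_sub]
  exact rpow_neg_le_mul_rpow_neg hl₁₀ hl₂ one_le_C (by linarith) (by linarith) p_phase_le

end IntrinsicCylinder

namespace Setting

variable {n N : ℕ} (S : Setting n N)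

lemma measurableSet_ΩT : MeasurableSet S.ΩT := (S.hΩ.prod isOpen_Ioo).measurableSet

lemma volume_ΩT_lt_top : volume S.ΩT < ⊤ :=
  (S.hΩb.prod (Metric.isBounded_Ioo 0 S.T)).measure_lt_top

lemma continuousOn_a : ContinuousOn S.a S.ΩT := by
  refine continuousOn_prod_of_separately_holder (C := S.Ca) S.hα.1 (half_pos S.hα.1) ?_ S.ha_t
  simpa only [dist_eq_norm, Real.norm_eq_abs] using S.ha_x

lemma integrableOn_norm_du_rpow : IntegrableOn (fun z => ‖S.du z‖ ^ S.q) S.ΩT := by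
  refine Integrable.mono' S.hsol.mem_LqW1q
    (S.hsol.meas_du.norm.pow_const _).aestronglyMeasurable (.of_forall fun z => ?_)
  rw [Real.norm_of_nonneg (by positivity)]
  exact le_add_of_nonneg_left (by positivity)

lemma integrableOn_Hdu : IntegrableOn S.Hdu S.ΩT := by
  have : IsFiniteMeasure (volume.restrict S.ΩT) := isFiniteMeasure_restrict.2 S.volume_ΩT_lt_top.ne
  obtain ⟨b, hb⟩ := S.ha_bdd
  have p_part : IntegrableOn (fun z => ‖S.du z‖ ^ S.p) S.ΩT :=
    integrable_norm_rpow_of_le S.hsol.meas_du.aestronglyMeasurable (by linarith [S.hp])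
      (by linarith [S.hp, S.hpq]) S.hpq.le S.integrableOn_norm_du_rpow
  have q_part : IntegrableOn (fun z => S.a z * ‖S.du z‖ ^ S.q) S.ΩT := by
    refine Integrable.bdd_mul (c := b) S.integrableOn_norm_du_rpow
      (S.continuousOn_a.aestronglyMeasurable S.measurableSet_ΩT) ?_
    filter_upwards [ae_restrict_mem S.measurableSet_ΩT] with z hz
    rw [Real.norm_of_nonneg (S.ha_nonneg z)]
    exact hb (mem_image_of_mem _ hz)
  exact p_part.add q_part

lemma integrableOn_Hdu_add_HF : IntegrableOn (fun z => S.Hdu z + S.HF z) S.ΩT :=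
  S.integrableOn_Hdu.add S.hF

lemma Hdu_add_HF_nonneg (z : Rn n × ℝ) : 0 ≤ S.Hdu z + S.HF z := by
  have := S.ha_nonneg z
  unfold Hdu HF
  positivity

lemma Mt1_eq_normalizedMass :
    S.Mt1 = normalizedMass volume (fun z => S.Hdu z + S.HF z) S.ΩT :=
  rfl

lemma Ca_mul_Mt1_rpow_nonneg : 0 ≤ S.Ca * S.Mt1 ^ (S.gam / S.p) := by
  have : 0 ≤ S.Mt1 := div_nonneg (integral_nonneg S.Hdu_add_HF_nonneg) (by positivity)
  exact mul_nonneg S.hCa (Real.rpow_nonneg this _)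

lemma gam_div_p : S.gam / S.p = S.α / (n + 2) := by
  have : S.p ≠ 0 := by linarith [S.hp]
  rw [gam]
  field_simp

lemma q_le_p_add_two : S.q ≤ S.p + 2 := by
  have : 2 * S.α / (n + 2) ≤ 2 := by
    rw [div_le_iff₀ (by positivity)]
    linarith [S.hα.2, n.cast_nonneg (α := ℝ)]
  linarith [S.hq]

end Setting

/-- **Section 6, inequality (6.18)**: comparability of the intrinsic scaling parameters of
two intersecting stopping cylinders. -/
theorem lambda_comparable {n N : ℕ} (S : Setting n N) :
    ∀ Λ : ℝ, 0 < Λ →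
    ∀ z₁ z₂ : Rn n × ℝ, ∀ l₁ l₂ ρ₁ ρ₂ : ℝ,
      0 < l₁ → 1 ≤ l₂ → 0 < ρ₁ → 0 < ρ₂ →
      Λ = l₁ ^ S.p + S.a z₁ * l₁ ^ S.q → Λ = l₂ ^ S.p + S.a z₂ * l₂ ^ S.q →
      S.Qp z₁ l₁ ρ₁ ⊆ S.ΩT → S.Qp z₂ l₂ ρ₂ ⊆ S.ΩT →
      (⨍ z in S.Qp z₁ l₁ ρ₁, (S.Hdu z + S.HF z)) = l₁ ^ S.p →
      (⨍ z in S.Qp z₂ l₂ ρ₂, (S.Hdu z + S.HF z)) = l₂ ^ S.p →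
      |S.a z₂ - S.a z₁| ≤ S.Ca * (10 * ρ₁) ^ S.α →
      l₂ < l₁ →
      l₁ ≤ (2 * (1 + 10 * S.Ca * S.Mt1 ^ (S.gam / S.p))) ^ (1 / S.p) * l₂
        ∧ l₁ ≤ (2 * S.Kc) ^ (1 / S.p) * l₂
        ∧ l₂ ^ (2 - S.p) ≤ 2 * S.Kc * l₁ ^ (2 - S.p)
        ∧ l₂ ^ (2 - S.q) ≤ 2 * S.Kc * l₁ ^ (2 - S.q) := by
  intro Λ _ z₁ z₂ l₁ l₂ ρ₁ ρ₂ _ hl₂ hρ₁ _ hΛ₁ hΛ₂ hsub _ havg _ ha hlt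
  have comparable {C : ℝ} (hC : 1 + 10 * S.Ca * S.Mt1 ^ (S.gam / S.p) ≤ C) :
      l₁ ≤ C ^ (1 / S.p) * l₂ ∧ ∀ r ∈ Icc 2 (S.p + 2), l₂ ^ (2 - r) ≤ C * l₁ ^ (2 - r) :=
    lambda_comparable_general S.integrableOn_Hdu_add_HF (.of_forall S.Hdu_add_HF_nonneg)
      (by linarith [S.hp]) S.hpq.le (by simpa using S.hq) (by linarith [S.hCa]) (S.ha_nonneg z₁)
      (hl₂.trans hlt.le) (one_pos.trans_le hl₂) hρ₁ (hΛ₁.symm.trans hΛ₂).le hsub havg.ge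
      (le_add_mul_rpow_of_abs_sub_le S.hCa (by norm_num) hρ₁.le S.hα.2 ha)
      (by rwa [finrank_euclideanSpace_fin, ← S.gam_div_p, ← S.Mt1_eq_normalizedMass])
  have hM := S.Ca_mul_Mt1_rpow_nonneg
  have hK := comparable (C := 2 * S.Kc) (by rw [Setting.Kc]; linarith)
  exact ⟨(comparable (by linarith)).1, hK.1, hK.2 _ ⟨S.hp, by linarith⟩,
    hK.2 _ ⟨S.hp.trans S.hpq.le, S.q_le_p_add_two⟩⟩

end DoublePhase
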